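/- arXiv:1506.08970 — 3 statements merged into one kernel-verified Lean document; each statement's English description precedes it below -/
import Mathlib

section
/- A finite simple graph G is chordal if and only if there exists a perfect elimination ordering of its vertex set. -/
/-- A finite simple graph is *chordal* if every cycle of length at least 4 has a chord,
i.e. an edge of the graph joining two vertices of the cycle that are not consecutive in
the cycle. -/
def SimpleGraph.IsChordal {V : Type*} (G : SimpleGraph V) : Prop :=
  ∀ ⦃v : V⦄ (c : G.Walk v v), c.IsCycle → 4 ≤ c.length →
    ∃ x y : V, x ∈ c.support ∧ y ∈ c.support ∧ G.Adj x y ∧ s(x, y) ∉ c.edges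

/-- An ordering of the vertices (given by an equivalence with `Fin (card V)`) is a
*perfect elimination ordering* if for each vertex `v`, the set of neighbors of `v`
that come later in the ordering forms a clique. -/
def SimpleGraph.IsPerfectElimOrdering {V : Type*} [Fintype V] (G : SimpleGraph V)
    (e : V ≃ Fin (Fintype.card V)) : Prop :=
  ∀ v : V, G.IsClique {u : V | G.Adj v u ∧ e v < e u}

/-!
In a cycle on at least four vertices, the two neighbours of its first vertex in a perfect
elimination ordering both come later, so they are adjacent, and this is a chord.

Conversely, perfect elimination orderings are built by repeatedly removing a simplicial vertex, so
it suffices to find one in every chordal graph that is not complete. Let `C` be a maximal connected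
set among those having a nonempty set `D` of vertices at distance at least two. By maximality, every
vertex of the boundary `B` of `C` is adjacent to all of `D`. Two distinct vertices of `B` are
adjacent to a common `w ∈ D` and joined by a path with interior in `C`, where `w` has no neighbours;
a shortest such path closes up to a chordless cycle through `w`, which must be a triangle. Hence a
simplicial vertex of the smaller graph on `D` remains simplicial in the whole graph.
-/

section

open SimpleGraph

variable {V : Type*} {G : SimpleGraph V}

theorem isChordal_iff_not_isChordless :
    G.IsChordal ↔
      ∀ ⦃v : V⦄ (c : G.Walk v v), c.IsCycle → 4 ≤ c.length → ¬ c.IsChordless := by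
  simp only [SimpleGraph.IsChordal, Walk.isChordless_iff_forall_mem_edges, not_forall, exists_prop]

theorem isChordless_of_length_eq_dist {x y : V} {p : G.Walk x y} (hp : p.length = G.dist x y) :
    p.IsChordless := by
  have succ_of_adj {i j : ℕ} (hij : i < j) (hj : j ≤ p.length)
      (h : G.Adj (p.getVert i) (p.getVert j)) : j = i + 1 := by
    have shortcut := dist_le ((p.take i).append (.cons h (p.drop j)))
    simp only [Walk.length_append, Walk.length_cons, Walk.take_length, Walk.drop_length]
      at shortcut
    lia
  rw [Walk.isChordless_iff_forall_mem_edges]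
  intro s t hs ht hst
  obtain ⟨i, rfl, hi⟩ := Walk.mem_support_iff_exists_getVert.1 hs
  obtain ⟨j, rfl, hj⟩ := Walk.mem_support_iff_exists_getVert.1 ht
  rw [Walk.mk_mem_edges_iff_exists]
  rcases lt_trichotomy i j with hij | rfl | hji
  · obtain rfl := succ_of_adj hij hj hst
    exact ⟨i, hj, rfl⟩
  · exact absurd hst G.irrefl
  · obtain rfl := succ_of_adj hji hi hst.symm
    exact ⟨j, hi, Sym2.eq_swap⟩

theorem isChordless_map_embedding {W : Type*} {H : SimpleGraph W} (f : G ↪g H) {x y : V}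
    {p : G.Walk x y} (hp : p.IsChordless) : (p.map f.toHom).IsChordless := by
  rw [Walk.isChordless_iff_forall_mem_edges]
  intro s t hs ht hst
  rw [Walk.support_map, List.mem_map] at hs ht
  obtain ⟨s, hs, rfl⟩ := hs
  obtain ⟨t, ht, rfl⟩ := ht
  rw [Walk.edges_map]
  exact List.mem_map.2 ⟨s(s, t), hp.mem_edges hs ht (f.map_adj_iff.1 hst), rfl⟩

theorem exists_isPath_isChordless_of_preconnected_induce {T : Set V}
    (hT : (G.induce T).Preconnected) {x y : V} (hx : x ∈ T) (hy : y ∈ T) :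
    ∃ p : G.Walk x y, p.IsPath ∧ p.IsChordless ∧ ∀ z ∈ p.support, z ∈ T := by
  obtain ⟨p, hpath, hdist⟩ := (hT ⟨x, hx⟩ ⟨y, hy⟩).exists_path_of_dist
  refine ⟨p.map (Embedding.induce T).toHom, hpath.map Subtype.val_injective,
    isChordless_map_embedding _ (isChordless_of_length_eq_dist hdist), fun z hz => ?_⟩
  obtain ⟨z, -, rfl⟩ := List.mem_map.1 (Walk.support_map (Embedding.induce T).toHom p ▸ hz)
  exact z.2

theorem induce_insert_connected {C : Set V} (hC : (G.induce C).Preconnected) {a b : V}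
    (ha : a ∈ C) (hab : G.Adj a b) : (G.induce (insert b C)).Connected := by
  rw [← Set.union_singleton]
  exact connected_induce_union hC .of_subsingleton ha rfl hab

section CloseUp

variable {w x y : V} {p : G.Walk x y} (hwx : G.Adj w x) (hyw : G.Adj y w)

theorem isCycle_cons_concat (hp : p.IsPath) (hw : w ∉ p.support) (hxy : x ≠ y) :
    (Walk.cons hwx (p.concat hyw)).IsCycle := by
  rw [Walk.cons_isCycle_iff, Walk.concat_isPath_iff, Walk.edges_concat, List.concat_eq_append,
    List.mem_append, List.mem_singleton]
  refine ⟨⟨hp, hw⟩, ?_⟩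
  rintro (h | h)
  · exact hw (p.fst_mem_support_of_mem_edges h)
  · grind [hyw.ne]

theorem isChordless_cons_concat (hp : p.IsChordless)
    (hw : ∀ z ∈ p.support, G.Adj w z → z = x ∨ z = y) :
    (Walk.cons hwx (p.concat hyw)).IsChordless := by
  rw [Walk.isChordless_iff_forall_mem_edges]
  have edge_at_w {z : V} (hz : z ∈ p.support) (hwz : G.Adj w z) :
      s(w, z) = s(w, x) ∨ s(w, z) = s(y, w) := by
    rcases hw z hz hwz with rfl | rfl
    · exact .inl rfl
    · exact .inr Sym2.eq_swap
  intro s t hs ht hst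
  simp only [Walk.support_cons, Walk.support_concat, List.mem_cons, List.mem_append,
    List.not_mem_nil, or_false] at hs ht
  simp only [Walk.edges_cons, Walk.edges_concat, List.concat_eq_append, List.mem_cons,
    List.mem_append, List.not_mem_nil, or_false]
  have := hp.mem_edges (u' := s) (v' := t)
  grind [hst.ne, hst.symm]

end CloseUp

theorem adj_of_isChordless_of_common_neighbor (hG : G.IsChordal) {w x y : V} (hwx : G.Adj w x)
    (hwy : G.Adj w y) (hxy : x ≠ y) {p : G.Walk x y} (hpath : p.IsPath) (hchord : p.IsChordless)
    (hwp : w ∉ p.support) (hnbr : ∀ z ∈ p.support, G.Adj w z → z = x ∨ z = y) : G.Adj x y := by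
  have hlt : (Walk.cons hwx (p.concat hwy.symm)).length < 4 := by
    by_contra! h
    exact isChordal_iff_not_isChordless.1 hG _ (isCycle_cons_concat hwx _ hpath hwp hxy) h
      (isChordless_cons_concat hwx _ hchord hnbr)
  rw [Walk.length_cons, Walk.length_concat] at hlt
  have hpos : p.length ≠ 0 := fun h => hxy (Walk.eq_of_length_eq_zero h)
  exact Walk.adj_of_length_eq_one (p := p) (by lia)

theorem adj_of_preconnected_of_common_neighbor (hG : G.IsChordal) {C : Set V}
    (hC : (G.induce C).Preconnected) {w : V} (hwC : w ∉ C) (hfar : ∀ c ∈ C, ¬ G.Adj c w) {x y : V}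
    (hwx : G.Adj w x) (hwy : G.Adj w y) (hxy : x ≠ y) (hx : ∃ a ∈ C, G.Adj a x)
    (hy : ∃ b ∈ C, G.Adj b y) : G.Adj x y := by
  obtain ⟨a, ha, hax⟩ := hx
  obtain ⟨b, hb, hby⟩ := hy
  have hT : (G.induce (insert x (insert y C))).Connected :=
    induce_insert_connected (induce_insert_connected hC hb hby).preconnected
      (Set.mem_insert_of_mem y ha) hax
  obtain ⟨p, hpath, hchord, hpT⟩ := exists_isPath_isChordless_of_preconnected_induce
    hT.preconnected (Set.mem_insert x _) (Set.mem_insert_of_mem x (Set.mem_insert y C))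
  refine adj_of_isChordless_of_common_neighbor hG hwx hwy hxy hpath hchord (fun hw => ?_)
    fun z hz hwz => ?_
  · rcases hpT w hw with rfl | rfl | hw
    exacts [G.irrefl hwx, G.irrefl hwy, hwC hw]
  · rcases hpT z hz with rfl | rfl | hzC
    exacts [.inl rfl, .inr rfl, absurd hwz.symm (hfar z hzC)]

/-- `v` is a *simplicial* vertex of the subgraph induced on `insert v S`: its neighbours in `S` form
a clique. The ambient set is a parameter so that vertices can be removed without changing the
type. -/
def IsSimplicialIn (G : SimpleGraph V) (S : Set V) (v : V) : Prop :=
  G.IsClique (S ∩ G.neighborSet v)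

/-- The vertices of `S` that are *anticomplete* to `C`: outside `C` and without neighbours in
`C`. -/
def anticompleteIn (G : SimpleGraph V) (S C : Set V) : Set V :=
  {d | d ∈ S ∧ d ∉ C ∧ ∀ c ∈ C, ¬ G.Adj c d}

theorem anticompleteIn_ssubset {S C : Set V} (hCS : C ⊆ S) (hne : C.Nonempty) :
    anticompleteIn G S C ⊂ S := by
  obtain ⟨c, hc⟩ := hne
  exact ⟨fun d hd => hd.1, fun h => (h (hCS hc)).2.1 hc⟩

/-- A nonempty connected subset of `S` that does not dominate `S`, in the sense that some vertex of
`S` is anticomplete to it. Maximal such sets yield simplicial vertices of chordal graphs. -/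
def IsConnectedNondominating (G : SimpleGraph V) (S C : Set V) : Prop :=
  C ⊆ S ∧ (G.induce C).Connected ∧ (anticompleteIn G S C).Nonempty

theorem isConnectedNondominating_singleton {S : Set V} {u v : V} (hu : u ∈ S) (hv : v ∈ S)
    (huv : u ≠ v) (hadj : ¬ G.Adj u v) : IsConnectedNondominating G S {u} := by
  refine ⟨Set.singleton_subset_iff.2 hu, .of_subsingleton, v, hv, huv.symm, ?_⟩
  rintro _ rfl
  exact hadj

section MaximalNondominating

variable {S C : Set V} (hC : Maximal (IsConnectedNondominating G S) C)
include hC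

theorem adj_of_mem_boundary_of_mem_anticompleteIn {b d : V} (hbS : b ∈ S) (hbC : b ∉ C)
    (hb : ∃ a ∈ C, G.Adj a b) (hd : d ∈ anticompleteIn G S C) : G.Adj b d := by
  obtain ⟨a, ha, hab⟩ := hb
  obtain ⟨hdS, hdC, hfar⟩ := hd
  by_contra hbd
  have hd' : d ∈ anticompleteIn G S (insert b C) := by
    refine ⟨hdS, ?_, ?_⟩
    · rintro (rfl | hd)
      exacts [hfar a ha hab, hdC hd]
    · rintro c (rfl | hc)
      exacts [hbd, hfar c hc]
  have hins : IsConnectedNondominating G S (insert b C) :=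
    ⟨Set.insert_subset hbS hC.prop.1, induce_insert_connected hC.prop.2.1.preconnected ha hab,
      d, hd'⟩
  exact hbC (hC.le_of_ge hins (Set.subset_insert b C) (Set.mem_insert b C))

theorem isSimplicialIn_of_isSimplicialIn_anticompleteIn (hG : G.IsChordal) {w : V}
    (hw : w ∈ anticompleteIn G S C) (hsimp : IsSimplicialIn G (anticompleteIn G S C) w) :
    IsSimplicialIn G S w := by
  have notMem_of_adj {u : V} (hwu : G.Adj w u) : u ∉ C := fun hu => hw.2.2 u hu hwu.symm
  have mem_or_boundary {u : V} (huS : u ∈ S) (hwu : G.Adj w u) :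
      u ∈ anticompleteIn G S C ∨ ∃ a ∈ C, G.Adj a u := by
    by_contra! h
    exact h.1 ⟨huS, notMem_of_adj hwu, h.2⟩
  rintro x ⟨hxS, hwx⟩ y ⟨hyS, hwy⟩ hxy
  rcases mem_or_boundary hxS hwx with hx | hx <;> rcases mem_or_boundary hyS hwy with hy | hy
  · exact hsimp ⟨hx, hwx⟩ ⟨hy, hwy⟩ hxy
  · exact (adj_of_mem_boundary_of_mem_anticompleteIn hC hyS (notMem_of_adj hwy) hy hx).symm
  · exact adj_of_mem_boundary_of_mem_anticompleteIn hC hxS (notMem_of_adj hwx) hx hy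
  · exact adj_of_preconnected_of_common_neighbor hG hC.prop.2.1.preconnected hw.2.1 hw.2.2 hwx hwy
      hxy hx hy

end MaximalNondominating

theorem exists_isSimplicialIn (hG : G.IsChordal) {S : Set V} (hS : S.Finite) (hne : S.Nonempty) :
    ∃ w ∈ S, IsSimplicialIn G S w := by
  induction hn : S.ncard using Nat.strong_induction_on generalizing S with
  | _ n ih =>
    by_cases hclique : G.IsClique S
    · obtain ⟨w, hw⟩ := hne
      exact ⟨w, hw, hclique.subset Set.inter_subset_left⟩
    obtain ⟨u, hu, v, hv, huv, hadj⟩ : ∃ u ∈ S, ∃ v ∈ S, u ≠ v ∧ ¬ G.Adj u v := by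
      simpa only [isClique_iff, Set.Pairwise, not_forall, exists_prop] using hclique
    have hfin : {C | IsConnectedNondominating G S C}.Finite :=
      hS.finite_subsets.subset fun _ hC => hC.1
    obtain ⟨C, -, hC⟩ :=
      hfin.exists_le_maximal (isConnectedNondominating_singleton hu hv huv hadj)
    obtain ⟨hCS, hconn, hfar⟩ := hC.prop
    have hlt := anticompleteIn_ssubset (G := G) hCS (Set.nonempty_coe_sort.1 hconn.nonempty)
    obtain ⟨w, hw, hsimp⟩ := ih _ (hn ▸ Set.ncard_lt_ncard hlt hS) (hS.subset hlt.subset)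
      hfar rfl
    exact ⟨w, hw.1, isSimplicialIn_of_isSimplicialIn_anticompleteIn hC hG hw hsimp⟩

/-- `f` orders the vertices of `S` in a perfect elimination ordering of the subgraph induced on `S`.
Labels are used instead of an enumeration so that `S` can vary; the values of `f` outside `S` are
irrelevant. -/
def IsPerfectElimLabelling {α : Type*} [LT α] (G : SimpleGraph V) (f : V → α) (S : Set V) : Prop :=
  Set.InjOn f S ∧ ∀ v ∈ S, G.IsClique {u | u ∈ S ∧ G.Adj v u ∧ f v < f u}

theorem IsPerfectElimLabelling.mono {α : Type*} [LT α] {f : V → α} {S T : Set V}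
    (hf : IsPerfectElimLabelling G f T) (hST : S ⊆ T) : IsPerfectElimLabelling G f S := by
  refine ⟨hf.1.mono hST, fun v hv => (hf.2 v (hST hv)).subset ?_⟩
  rintro u ⟨hu, hvu, hlt⟩
  exact ⟨hST hu, hvu, hlt⟩

open Classical in
theorem IsPerfectElimLabelling.insert {f : V → ℕ} {S : Set V} {w : V}
    (hf : IsPerfectElimLabelling G f S) (hw : IsSimplicialIn G S w) :
    IsPerfectElimLabelling G (fun v => if v = w then 0 else f v + 1) (insert w S) := by
  refine ⟨?_, ?_⟩
  · have := hf.1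
    intro a ha b hb hab
    grind [Set.InjOn]
  · intro v hv
    by_cases hvw : v = w
    · subst hvw
      refine hw.subset ?_
      rintro u ⟨hu, hvu, -⟩
      exact ⟨hu.resolve_left hvu.ne', hvu⟩
    · refine (hf.2 v (hv.resolve_left hvw)).subset ?_
      rintro u ⟨hu, hvu, hlt⟩
      grind

theorem exists_isPerfectElimLabelling (hG : G.IsChordal) {S : Set V} (hS : S.Finite) :
    ∃ f : V → ℕ, IsPerfectElimLabelling G f S := by
  induction hn : S.ncard generalizing S with
  | zero =>
    obtain rfl := (Set.ncard_eq_zero hS).1 hn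
    exact ⟨0, Set.injOn_empty 0, fun v hv => hv.elim⟩
  | succ n ih =>
    obtain ⟨w, hw, hsimp⟩ := exists_isSimplicialIn hG hS (Set.nonempty_of_ncard_ne_zero (by lia))
    obtain ⟨f, hf⟩ := ih (hS.subset Set.sdiff_subset)
      (by rw [Set.ncard_sdiff_singleton_of_mem hw, hn, Nat.add_sub_cancel])
    have hins := hf.insert (hsimp.subset (Set.inter_subset_inter_left _ Set.sdiff_subset))
    rw [Set.insert_sdiff_singleton, Set.insert_eq_of_mem hw] at hins
    exact ⟨_, hins⟩

theorem mk_snd_penultimate_notMem_edges {v : V} {c : G.Walk v v} (hc : c.IsCycle)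
    (hlen : 4 ≤ c.length) : s(c.snd, c.penultimate) ∉ c.edges := by
  rw [Walk.mk_mem_edges_iff_exists]
  rintro ⟨i, hi, h⟩
  rcases Sym2.eq_iff.1 h with ⟨hsnd, hpen⟩ | ⟨hpen, hsnd⟩
  · have : i = 1 := hc.getVert_injOn' (by grind) (by grind) hsnd
    have : i + 1 = c.length - 1 := hc.getVert_injOn (by grind) (by grind) hpen
    lia
  · have : i = c.length - 1 := hc.getVert_injOn' (by grind) (by grind) hpen
    have : i + 1 = 1 := hc.getVert_injOn (by grind) (by grind) hsnd
    lia

section Cycle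

variable {α : Type*} [LinearOrder α] {f : V → α} {S : Set V}

theorem IsPerfectElimLabelling.adj_snd_penultimate (hf : IsPerfectElimLabelling G f S) {v : V}
    {c : G.Walk v v} (hc : c.IsCycle) (hcS : ∀ z ∈ c.support, z ∈ S)
    (hmin : ∀ z ∈ c.support, f v ≤ f z) : G.Adj c.snd c.penultimate := by
  have hv : v ∈ S := hcS v c.start_mem_support
  have mem_later {z : V} (hz : z ∈ c.support) (hvz : G.Adj v z) :
      z ∈ {u | u ∈ S ∧ G.Adj v u ∧ f v < f u} :=
    ⟨hcS z hz, hvz, (hmin z hz).lt_of_ne fun h => hvz.ne (hf.1 hv (hcS z hz) h)⟩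
  exact hf.2 v hv (mem_later (c.getVert_mem_support _) (c.adj_snd hc.not_nil))
    (mem_later (c.getVert_mem_support _) (c.adj_penultimate hc.not_nil).symm)
    hc.snd_ne_penultimate

theorem IsPerfectElimLabelling.exists_chord (hf : IsPerfectElimLabelling G f S) {v : V}
    {c : G.Walk v v} (hc : c.IsCycle) (hlen : 4 ≤ c.length) (hcS : ∀ z ∈ c.support, z ∈ S) :
    ∃ x y : V, x ∈ c.support ∧ y ∈ c.support ∧ G.Adj x y ∧ s(x, y) ∉ c.edges := by
  classical
  obtain ⟨m, hm, hmin⟩ := c.support.toFinset.exists_min_image f ⟨v, by simp⟩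
  simp only [List.mem_toFinset] at hm hmin
  let r := c.rotate m hm
  have mem_support {z : V} : z ∈ r.support ↔ z ∈ c.support := c.mem_support_rotate_iff m hm
  have mem_edges {e : Sym2 V} : e ∈ r.edges ↔ e ∈ c.edges := (c.rotate_edges m hm).mem_iff
  have hr : r.IsCycle := hc.rotate hm
  exact ⟨r.snd, r.penultimate, mem_support.1 (r.getVert_mem_support _),
    mem_support.1 (r.getVert_mem_support _),
    hf.adj_snd_penultimate hr (fun z hz => hcS z (mem_support.1 hz))
      (fun z hz => hmin z (mem_support.1 hz)),
    mem_edges.not.1 (mk_snd_penultimate_notMem_edges hr (hlen.trans_eq (by simp [r])))⟩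

end Cycle

theorem exists_isPerfectElimOrdering_iff [Fintype V] :
    (∃ e : V ≃ Fin (Fintype.card V), G.IsPerfectElimOrdering e) ↔
      ∃ f : V → ℕ, IsPerfectElimLabelling G f Set.univ := by
  constructor
  · rintro ⟨e, he⟩
    exact ⟨fun v => e v, (Fin.val_injective.comp e.injective).injOn,
      fun v _ => (he v).subset fun u hu => hu.2⟩
  · rintro ⟨f, hinj, hf⟩
    let _ : LinearOrder V := LinearOrder.lift' f (Set.injOn_univ.1 hinj)
    let e : V ≃o Fin (Fintype.card V) := (Fintype.orderIsoFinOfCardEq V rfl).symm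
    refine ⟨e.toEquiv, fun v => (hf v trivial).subset ?_⟩
    rintro u ⟨hvu, hlt⟩
    exact ⟨trivial, hvu, e.lt_iff_lt.1 hlt⟩

theorem isChordal_iff_exists_perfectElimOrdering_general (G : SimpleGraph V) :
    G.IsChordal ↔ ∀ S : Set V, S.Finite → ∃ f : V → ℕ, IsPerfectElimLabelling G f S := by
  refine ⟨fun hG S hS => exists_isPerfectElimLabelling hG hS, fun h v c hc hlen => ?_⟩
  obtain ⟨f, hf⟩ := h {z | z ∈ c.support} c.support.finite_toSet
  exact hf.exists_chord hc hlen fun z hz => hz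

end

/-- A finite simple graph is chordal if and only if there exists a perfect elimination
ordering of its vertex set. -/
theorem isChordal_iff_exists_perfectElimOrdering {V : Type*} [Fintype V]
    (G : SimpleGraph V) :
    G.IsChordal ↔ ∃ e : V ≃ Fin (Fintype.card V), G.IsPerfectElimOrdering e := by
  rw [isChordal_iff_exists_perfectElimOrdering_general, exists_isPerfectElimOrdering_iff]
  exact ⟨fun h => h _ Set.finite_univ, fun ⟨f, hf⟩ S _ => ⟨f, hf.mono S.subset_univ⟩⟩
end

section
/- If G is a finite connected chordal graph, then the geometric realization of the 2-skeleton of the flag complex of G is simply connected. (More generally, every connected component of the geometric realization of the 2-skeleton of the flag complex of a finite chordal graph is simply connected.) -/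
/-- The 2-skeleton of the flag complex of a graph `G`: the faces are the cliques of `G`
of cardinality at most 3 (including singletons and the empty set). -/
def flagComplexTwoSkeleton {V : Type*} (G : SimpleGraph V) : Set (Finset V) :=
  { σ : Finset V | G.IsClique (σ : Set V) ∧ σ.card ≤ 3 }

/-- The geometric realization of an abstract simplicial complex on a vertex set `V`,
given as a set of faces: the union, inside the real vector space `V → ℝ` with basis the
standard basis vectors, of the convex hulls of the faces. -/
def geomRealization {V : Type*} [DecidableEq V] (F : Set (Finset V)) : Set (V → ℝ) :=
  ⋃ σ ∈ F, convexHull ℝ ((fun x => (Pi.single x 1 : V → ℝ)) '' (σ : Set V))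

/-!
A flat groupoid-valued connection on a chordal graph has trivial holonomy: a shortest closed walk
with nontrivial holonomy would be a cycle of length at least 4, and a chord cuts it into two shorter
closed walks. Straight edges define such a connection with values in the fundamental groupoid of
the realization, because the triangles of `G` are filled. The open stars of the vertices are
star-shaped and cover the realization, so up to homotopy every path is an edge path, and hence any
two paths with the same endpoints are homotopic.
-/

open CategoryTheory FundamentalGroupoid Set Topology

/-! ### Flat connections on chordal graphs -/

/-- A flat connection on a graph `G` with values in a groupoid: an object for every vertex and a
morphism for every oriented edge, such that reversing an edge inverts its morphism and the holonomy
around every triangle is trivial. It represents the fundamental groupoid of the flag complex of `G`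
by edge paths. -/
structure FlatConnection {V : Type*} (G : SimpleGraph V) (C : Type*) [Groupoid C] where
  obj : V → C
  map {u v : V} : G.Adj u v → (obj u ⟶ obj v)
  map_comp_map_symm {u v : V} (h : G.Adj u v) : map h ≫ map h.symm = 𝟙 (obj u)
  map_comp_map {u v w : V} (huv : G.Adj u v) (hvw : G.Adj v w) (huw : G.Adj u w) :
    map huv ≫ map hvw = map huw

namespace FlatConnection

variable {V : Type*} {G : SimpleGraph V} {C : Type*} [Groupoid C] (A : FlatConnection G C)

/-- Parallel transport along a walk, the composite of the morphisms of its edges. -/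
def transport : ∀ {u v : V}, G.Walk u v → (A.obj u ⟶ A.obj v)
  | _, _, .nil => 𝟙 _
  | _, _, .cons h p => A.map h ≫ transport p

@[simp]
theorem transport_nil (v : V) : A.transport (.nil : G.Walk v v) = 𝟙 (A.obj v) := rfl

@[simp]
theorem transport_cons {u v w : V} (h : G.Adj u v) (p : G.Walk v w) :
    A.transport (.cons h p) = A.map h ≫ A.transport p := rfl

@[simp]
theorem transport_append {u v w : V} (p : G.Walk u v) (q : G.Walk v w) :
    A.transport (p.append q) = A.transport p ≫ A.transport q := by
  induction p with
  | nil => simp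
  | cons h p ih => simp [ih]

theorem transport_append_eq_id_comm {u v : V} (p : G.Walk u v) (q : G.Walk v u) :
    A.transport (p.append q) = 𝟙 _ ↔ A.transport (q.append p) = 𝟙 _ := by
  have comm {x y : C} (f : x ⟶ y) (g : y ⟶ x) (h : f ≫ g = 𝟙 x) : g ≫ f = 𝟙 y := by
    rw [← cancel_epi f, ← Category.assoc, h, Category.id_comp, Category.comp_id]
  simp only [transport_append]
  exact ⟨comm _ _, comm _ _⟩

theorem transport_append_eq_id_of_adj {u v : V} (h : G.Adj u v) {p : G.Walk u v} {q : G.Walk v u}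
    (hp : A.transport (.cons h.symm p) = 𝟙 _) (hq : A.transport (.cons h q) = 𝟙 _) :
    A.transport (p.append q) = 𝟙 _ := by
  rw [transport_cons] at hp hq
  calc A.transport (p.append q)
      = (A.map h ≫ A.map h.symm) ≫ A.transport p ≫ A.transport q := by
        rw [A.map_comp_map_symm, Category.id_comp, transport_append]
    _ = A.map h ≫ (A.map h.symm ≫ A.transport p) ≫ A.transport q := by simp only [Category.assoc]
    _ = 𝟙 _ := by rw [hp, Category.id_comp, hq]

theorem transport_eq_id_of_length_eq_three {v : V} (c : G.Walk v v) (hc : c.length = 3) :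
    A.transport c = 𝟙 _ := by
  match c, hc with
  | .cons h₁ (.cons h₂ (.cons h₃ .nil)), _ =>
    simp only [transport_cons, transport_nil, Category.comp_id]
    rw [A.map_comp_map h₂ h₃ h₁.symm, A.map_comp_map_symm]

theorem transport_eq_id_of_not_isCycle {v : V} {c : G.Walk v v} (hc : ¬ c.IsCycle)
    (shorter : ∀ ⦃w : V⦄ (d : G.Walk w w), d.length < c.length → A.transport d = 𝟙 _) :
    A.transport c = 𝟙 _ := by
  cases c with
  | nil => rfl
  | @cons _ w _ h p =>
    by_cases hp : p.IsPath
    · have hedge : s(w, v) ∈ p.edges := by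
        rw [SimpleGraph.Walk.cons_isCycle_iff] at hc
        rw [Sym2.eq_swap]
        exact not_not.1 fun hn => hc ⟨hp, hn⟩
      rw [hp.eq_adj_toWalk_of_mem_edges hedge]
      simp [A.map_comp_map_symm]
    · rw [SimpleGraph.Walk.isPath_iff_isSubwalk_imp_nil] at hp
      push Not at hp
      obtain ⟨x, loop, ⟨before, after, rfl⟩, hloop⟩ := hp
      have hpos : 0 < loop.length := SimpleGraph.Walk.not_nil_iff_lt_length.1 hloop
      have htransport_loop : A.transport loop = 𝟙 _ := shorter loop <| by
        simp only [SimpleGraph.Walk.length_cons, SimpleGraph.Walk.length_append]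
        omega
      have htransport_rest : A.transport (.cons h (before.append after)) = 𝟙 _ := shorter _ <| by
        simp only [SimpleGraph.Walk.length_cons, SimpleGraph.Walk.length_append]
        omega
      simpa [htransport_loop] using htransport_rest

end FlatConnection

theorem two_le_length_of_notMem_edges {V : Type*} {G : SimpleGraph V} {u v : V} (huv : u ≠ v)
    (p : G.Walk u v) (hp : s(u, v) ∉ p.edges) : 2 ≤ p.length := by
  match p with
  | .nil => exact absurd rfl huv
  | .cons _ .nil => simp at hp
  | .cons _ (.cons _ _) => simp

namespace FlatConnection

variable {V : Type*} {G : SimpleGraph V} {C : Type*} [Groupoid C] (A : FlatConnection G C)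

theorem transport_eq_id_of_chord {v x y : V} {c : G.Walk v v} (hx : x ∈ c.support)
    (hy : y ∈ c.support) (h : G.Adj x y) (hxy : s(x, y) ∉ c.edges)
    (shorter : ∀ ⦃w : V⦄ (d : G.Walk w w), d.length < c.length → A.transport d = 𝟙 _) :
    A.transport c = 𝟙 _ := by
  obtain ⟨p, q, rfl⟩ := SimpleGraph.Walk.mem_support_iff_exists_append.1 hx
  rw [transport_append_eq_id_comm]
  have hy' : y ∈ (q.append p).support := by
    rwa [SimpleGraph.Walk.mem_support_append_iff, or_comm,
      ← SimpleGraph.Walk.mem_support_append_iff]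
  obtain ⟨a, b, hab⟩ := SimpleGraph.Walk.mem_support_iff_exists_append.1 hy'
  have hedges : s(x, y) ∉ (a.append b).edges := by
    rw [← hab, SimpleGraph.Walk.edges_append, List.mem_append, or_comm, ← List.mem_append,
      ← SimpleGraph.Walk.edges_append]
    exact hxy
  have hlength : (p.append q).length = a.length + b.length := by
    rw [← SimpleGraph.Walk.length_append, ← hab, SimpleGraph.Walk.length_append, add_comm,
      SimpleGraph.Walk.length_append]
  rw [SimpleGraph.Walk.edges_append, List.mem_append, not_or] at hedges
  have ha : 2 ≤ a.length := two_le_length_of_notMem_edges h.ne a hedges.1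
  have hb : 2 ≤ b.length :=
    two_le_length_of_notMem_edges h.ne' b (by rw [Sym2.eq_swap]; exact hedges.2)
  rw [hab]
  refine A.transport_append_eq_id_of_adj h (shorter _ ?_) (shorter _ ?_) <;>
    simp only [SimpleGraph.Walk.length_cons, hlength] <;> omega

theorem transport_eq_id_of_isChordal (hG : G.IsChordal) {v : V} (c : G.Walk v v) :
    A.transport c = 𝟙 _ := by
  induction hn : c.length using Nat.strong_induction_on generalizing v with
  | _ n ih =>
    subst hn
    have shorter : ∀ ⦃w : V⦄ (d : G.Walk w w), d.length < c.length → A.transport d = 𝟙 _ :=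
      fun _ d hd => ih _ hd d rfl
    by_cases hc : c.IsCycle
    · obtain hlength | hlength := hc.three_le_length.eq_or_lt
      · exact A.transport_eq_id_of_length_eq_three c hlength.symm
      · obtain ⟨x, y, hx, hy, hadj, hchord⟩ := hG c hc hlength
        exact A.transport_eq_id_of_chord hx hy hadj hchord shorter
    · exact A.transport_eq_id_of_not_isCycle hc shorter

theorem transport_eq_of_isChordal (hG : G.IsChordal) {u v : V} (p q : G.Walk u v) :
    A.transport p = A.transport q := by
  have hp := A.transport_eq_id_of_isChordal hG (p.append q.reverse)
  have hq := A.transport_eq_id_of_isChordal hG (q.reverse.append q)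
  rw [transport_append] at hp hq
  calc A.transport p = A.transport p ≫ A.transport q.reverse ≫ A.transport q := by
        rw [hq, Category.comp_id]
    _ = A.transport q := by rw [← Category.assoc, hp, Category.id_comp]

end FlatConnection

/-! ### Paths and path components -/

section Topological

variable {X : Type*} [TopologicalSpace X]

theorem homotopic_of_isSimplyConnected {S : Set X} (hS : IsSimplyConnected S) {x y : X}
    {p q : Path x y} (hp : ∀ t, p t ∈ S) (hq : ∀ t, q t ∈ S) : p.Homotopic q := by
  have := hS.simplyConnectedSpace
  lift x to S using by simpa using hp 0
  lift y to S using by simpa using hp 1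
  let p' : Path x y := ⟨⟨fun t => ⟨p t, hp t⟩, by fun_prop⟩, by simp, by simp⟩
  let q' : Path x y := ⟨⟨fun t => ⟨q t, hq t⟩, by fun_prop⟩, by simp, by simp⟩
  obtain ⟨H⟩ := SimplyConnectedSpace.paths_homotopic p' q'
  exact ⟨H.map ⟨Subtype.val, continuous_subtype_val⟩⟩

theorem morphismProperty_of_openCover {ι : Type*} {U : ι → Set X} (hUo : ∀ i, IsOpen (U i))
    (hUc : ∀ x, ∃ i, x ∈ U i) (W : MorphismProperty (FundamentalGroupoid X))
    [W.IsStableUnderComposition]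
    (hW : ∀ (i : ι) ⦃x y : X⦄ (p : Path x y), (∀ t, p t ∈ U i) → W (fromPath (.mk p)))
    {x y : X} (p : Path x y) : W (fromPath (.mk p)) := by
  obtain ⟨t, ht_zero, ht_mono, ⟨n, ht_one⟩, ht⟩ :=
    exists_monotone_Icc_subset_open_cover_unitInterval (c := fun i => p ⁻¹' U i)
      (fun i => (hUo i).preimage p.continuous) (fun s _ => mem_iUnion.2 (hUc (p s)))
  have small {a b : unitInterval} (hab : a ≤ b) {i : ι} (hi : Icc a b ⊆ p ⁻¹' U i) :
      W (fromPath (.mk (p.subpath a b))) := by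
    refine hW i _ fun s => ?_
    have hs : p.subpath a b s ∈ p '' Icc a b := p.range_subpath_of_le a b hab ▸ mem_range_self s
    exact image_subset_iff.2 hi hs
  have initial (k : ℕ) : W (fromPath (.mk (p.subpath (t 0) (t k)))) := by
    induction k with
    | zero =>
      obtain ⟨i, hi⟩ := ht 0
      exact small le_rfl ((Icc_subset_Icc_right (ht_mono zero_le_one)).trans hi)
    | succ k ih =>
      obtain ⟨i, hi⟩ := ht k
      have hcomp := W.comp_mem _ _ ih (small (ht_mono k.le_succ) hi)
      have hsplit := (fromPath_eq_iff_homotopic _ _).2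
        ⟨Path.Homotopy.subpathTransSubpath p (t 0) (t k) (t (k + 1))⟩
      exact hsplit ▸ hcomp
  have uncast {x' y' : X} (hx : x' = x) (hy : y' = y)
      (h : W (fromPath (.mk (p.cast hx hy)))) : W (fromPath (.mk p)) := by
    subst hx hy
    exact h
  have htotal := initial n
  rw [ht_zero, ht_one n le_rfl, Path.subpath_zero_one] at htotal
  exact uncast _ _ htotal

theorem connectedComponent_eq_pathComponent_of_mem_nhds (h : ∀ x : X, pathComponent x ∈ 𝓝 x)
    (x : X) : connectedComponent x = pathComponent x := by
  have hopen (y : X) : IsOpen (pathComponent y) := isOpen_iff_mem_nhds.2 fun z hz =>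
    pathComponent_congr hz ▸ h z
  have hclosed : IsClosed (pathComponent x) := by
    refine ⟨isOpen_iff_mem_nhds.2 fun y hy => Filter.mem_of_superset (h y) fun z hz hzx => ?_⟩
    exact hy (Joined.trans hzx (Joined.symm hz))
  exact (IsClopen.connectedComponent_subset ⟨hclosed, hopen x⟩ (mem_pathComponent_self x)).antisymm
    (pathComponent_subset_component x)

theorem isSimplyConnected_pathComponent
    (h : ∀ (y : X) (p : Path y y), p.Homotopic (Path.refl y)) (x : X) :
    IsSimplyConnected (pathComponent x) := by
  refine isSimplyConnected_iff_exists_homotopy_refl_forall_mem.2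
    ⟨isPathConnected_pathComponent, fun y p hp => ?_⟩
  obtain ⟨H⟩ := h y p
  have : ContractibleSpace unitInterval := (convex_Icc (0 : ℝ) 1).contractibleSpace ⟨0, by simp⟩
  have hy : y ∈ pathComponent x := by simpa using hp 0
  have hrange : range H ⊆ pathComponent y :=
    (isPathConnected_range (map_continuous H)).subset_pathComponent ⟨(0, 0), by simp⟩
  exact ⟨H, fun t => pathComponent_congr hy ▸ hrange (mem_range_self t)⟩

end Topological

section Segments

variable {E : Type*} [AddCommGroup E] [Module ℝ E] [TopologicalSpace E] [ContinuousAdd E]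
  [ContinuousSMul ℝ E] {X S : Set E}

theorem isSimplyConnected_preimage_of_starConvex (hSX : S ⊆ X) {c : E} (hS : StarConvex ℝ c S)
    (hne : S.Nonempty) : IsSimplyConnected ((↑) ⁻¹' S : Set X) := by
  have := hS.contractibleSpace hne
  rw [← IsEmbedding.subtypeVal.isSimplyConnected_image, Subtype.image_preimage_coe,
    inter_eq_right.2 hSX]
  exact SimplyConnectedSpace.ofContractible S

/-- The straight path between two points of `X`, as a path in `X`. -/
noncomputable def segmentPath (a b : X) (h : segment ℝ (a : E) b ⊆ X) : Path a b where
  toFun t := ⟨Path.segment (a : E) b t, h (Path.range_segment (a : E) b ▸ mem_range_self t)⟩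
  source' := by simp
  target' := by simp

theorem segmentPath_mem_segment (a b : X) (h : segment ℝ (a : E) b ⊆ X) (t : unitInterval) :
    (segmentPath a b h t : E) ∈ segment ℝ (a : E) b :=
  Path.range_segment (a : E) b ▸ mem_range_self t

/-- The class of the straight path between two points of `X` in the fundamental groupoid of `X`. -/
noncomputable def segmentHom (a b : X) (h : segment ℝ (a : E) b ⊆ X) :
    FundamentalGroupoid.mk a ⟶ FundamentalGroupoid.mk b :=
  fromPath (.mk (segmentPath a b h))

theorem segmentHom_self (a : X) (h : segment ℝ (a : E) a ⊆ X) : segmentHom a a h = 𝟙 _ := by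
  have : segmentPath a a h = Path.refl a := by
    ext t
    simp [segmentPath]
  rw [segmentHom, this]
  rfl

theorem segmentHom_comp_fromPath (hSX : S ⊆ X) {c x y : X} (hS : StarConvex ℝ (c : E) S)
    (p : Path x y) (hp : ∀ t, (p t : E) ∈ S) (hx : segment ℝ (c : E) x ⊆ X)
    (hy : segment ℝ (c : E) y ⊆ X) :
    segmentHom c x hx ≫ fromPath (.mk p) = segmentHom c y hy := by
  have hxS : (x : E) ∈ S := by simpa using hp 0
  have hyS : (y : E) ∈ S := by simpa using hp 1
  refine (fromPath_eq_iff_homotopic ((segmentPath c x hx).trans p) (segmentPath c y hy)).2 <|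
    homotopic_of_isSimplyConnected (isSimplyConnected_preimage_of_starConvex hSX hS ⟨x, hxS⟩)
      (fun t => ?_) fun t => hS.segment_subset hyS (segmentPath_mem_segment c y hy t)
  rw [Path.trans_apply]
  split_ifs
  · exact hS.segment_subset hxS (segmentPath_mem_segment c x hx _)
  · exact hp _

theorem segmentHom_comp_segmentHom (hSX : S ⊆ X) (hS : Convex ℝ S) {a b c : X} (ha : (a : E) ∈ S)
    (hb : (b : E) ∈ S) (hc : (c : E) ∈ S) (hab : segment ℝ (a : E) b ⊆ X)
    (hbc : segment ℝ (b : E) c ⊆ X) (hac : segment ℝ (a : E) c ⊆ X) :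
    segmentHom a b hab ≫ segmentHom b c hbc = segmentHom a c hac :=
  segmentHom_comp_fromPath hSX (hS.starConvex ha) _
    (fun t => hS.segment_subset hb hc (segmentPath_mem_segment b c hbc t)) hab hac

end Segments

/-! ### Faces and open stars -/

theorem singleton_mem_flagComplexTwoSkeleton {V : Type*} {G : SimpleGraph V} (v : V) :
    {v} ∈ flagComplexTwoSkeleton G := by
  simp [flagComplexTwoSkeleton]

namespace geomRealization

section Stars

variable {V : Type*} [DecidableEq V] {F : Set (Finset V)} {σ : Finset V} {v : V} {x : V → ℝ}

/-- The geometric simplex spanned by the vertices in `σ`. -/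
def face (σ : Finset V) : Set (V → ℝ) :=
  convexHull ℝ ((fun x => (Pi.single x 1 : V → ℝ)) '' (σ : Set V))

theorem mem_iff : x ∈ geomRealization F ↔ ∃ σ ∈ F, x ∈ face σ := by
  simp only [geomRealization, face, mem_iUnion, exists_prop]

theorem face_subset (hσ : σ ∈ F) : face σ ⊆ geomRealization F :=
  fun _ hx => mem_iff.2 ⟨σ, hσ, hx⟩

theorem convex_face (σ : Finset V) : Convex ℝ (face σ) := convex_convexHull ℝ _

theorem single_mem_face (hv : v ∈ σ) : Pi.single v 1 ∈ face σ :=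
  subset_convexHull ℝ _ ⟨v, hv, rfl⟩

theorem mem_of_mem_face_of_pos (hx : x ∈ face σ) (hv : 0 < x v) : v ∈ σ := by
  by_contra hvσ
  have hface : face σ ⊆ LinearMap.ker (LinearMap.proj v : (V → ℝ) →ₗ[ℝ] ℝ) := by
    refine convexHull_min ?_ (Submodule.convex _)
    rintro _ ⟨w, hw, rfl⟩
    simp [Pi.single_eq_of_ne (ne_of_mem_of_not_mem hw hvσ).symm]
  exact hv.ne' (hface hx)

theorem sum_eq_one_of_mem_face (hx : x ∈ face σ) : ∑ i ∈ σ, x i = 1 := by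
  have hface : face σ ⊆ {y | (∑ i ∈ σ, LinearMap.proj i : (V → ℝ) →ₗ[ℝ] ℝ) y = 1} := by
    refine convexHull_min ?_ (convex_hyperplane (LinearMap.isLinear _) 1)
    rintro _ ⟨w, hw, rfl⟩
    simpa [Finset.sum_pi_single] using hw
  simpa using hface hx

theorem exists_pos (hx : x ∈ geomRealization F) : ∃ v, 0 < x v := by
  obtain ⟨σ, _, hxσ⟩ := mem_iff.1 hx
  by_contra! hnonpos
  have hsum : ∑ i ∈ σ, x i ≤ 0 := Finset.sum_nonpos fun i _ => hnonpos i
  exact one_pos.not_ge (sum_eq_one_of_mem_face hxσ ▸ hsum)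

variable (F v) in
/-- The open star of the vertex `v`, the union of the relative interiors of the simplices that
contain `v`: it consists of the points whose barycentric coordinate at `v` is positive. -/
def openStar : Set (V → ℝ) := {x ∈ geomRealization F | 0 < x v}

theorem openStar_subset : openStar F v ⊆ geomRealization F := fun _ hx => hx.1

theorem exists_mem_openStar (x : geomRealization F) : ∃ v, (x : V → ℝ) ∈ openStar F v :=
  (exists_pos x.2).imp fun _ hv => ⟨x.2, hv⟩

theorem isOpen_preimage_openStar (v : V) :
    IsOpen ((↑) ⁻¹' openStar F v : Set (geomRealization F)) := by
  have : ((↑) ⁻¹' openStar F v : Set (geomRealization F)) =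
      {x : geomRealization F | 0 < (x : V → ℝ) v} :=
    ext fun x => and_iff_right x.2
  rw [this]
  exact isOpen_lt continuous_const ((continuous_apply v).comp continuous_subtype_val)

theorem starConvex_openStar (v : V) : StarConvex ℝ (Pi.single v 1) (openStar F v) := by
  rintro x ⟨hx, hv⟩ a b ha hb hab
  obtain ⟨σ, hσ, hxσ⟩ := mem_iff.1 hx
  have hvσ : Pi.single v 1 ∈ face σ := single_mem_face (mem_of_mem_face_of_pos hxσ hv)
  refine ⟨face_subset hσ (convex_face σ hvσ hxσ ha hb hab), ?_⟩
  simpa using convex_Ioi (0 : ℝ) (mem_Ioi.2 one_pos) (mem_Ioi.2 hv) ha hb hab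

theorem joined_of_mem_openStar {x y : geomRealization F} (hx : (x : V → ℝ) ∈ openStar F v)
    (hy : (y : V → ℝ) ∈ openStar F v) : Joined x y :=
  ((isSimplyConnected_preimage_of_starConvex openStar_subset (starConvex_openStar v)
    ⟨x, hx⟩).isPathConnected.joinedIn x hx y hy).joined

theorem pathComponent_mem_nhds (x : geomRealization F) : pathComponent x ∈ 𝓝 x := by
  obtain ⟨v, hv⟩ := exists_mem_openStar x
  exact Filter.mem_of_superset ((isOpen_preimage_openStar v).mem_nhds hv)
    fun _ hy => joined_of_mem_openStar hv hy

end Stars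

/-! ### Edge paths -/

section EdgePaths

variable {V : Type*} [DecidableEq V] {G : SimpleGraph V} {F : Set (Finset V)}

theorem pair_mem_flagComplexTwoSkeleton {u v : V} (h : G.Adj u v) :
    {u, v} ∈ flagComplexTwoSkeleton G := by
  refine ⟨?_, Finset.card_le_two.trans (by norm_num)⟩
  simpa [SimpleGraph.isClique_pair] using fun _ => h

theorem triple_mem_flagComplexTwoSkeleton {u v w : V} (huv : G.Adj u v) (hvw : G.Adj v w)
    (huw : G.Adj u w) : {u, v, w} ∈ flagComplexTwoSkeleton G := by
  refine ⟨?_, Finset.card_le_three⟩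
  exact_mod_cast (SimpleGraph.is3Clique_triple_iff.2 ⟨huv, huw, hvw⟩).isClique

variable (hF : flagComplexTwoSkeleton G ⊆ F)

/-- The vertex `v` as a point of the realization. -/
def vertex (v : V) : geomRealization F :=
  ⟨Pi.single v 1, face_subset (hF (singleton_mem_flagComplexTwoSkeleton v))
    (single_mem_face (Finset.mem_singleton_self v))⟩

theorem segment_vertex_subset_of_adj {u v : V} (h : G.Adj u v) :
    segment ℝ (vertex hF u : V → ℝ) (vertex hF v) ⊆ geomRealization F :=
  ((convex_face _).segment_subset (single_mem_face (by simp)) (single_mem_face (by simp))).trans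
    (face_subset (hF (pair_mem_flagComplexTwoSkeleton h)))

/-- The flat connection on `G` with values in the fundamental groupoid of the realization that sends
an edge to the class of the straight path along it. -/
noncomputable def edgeConnection :
    FlatConnection G (FundamentalGroupoid (geomRealization F)) where
  obj v := ⟨vertex hF v⟩
  map {u v} h := segmentHom (vertex hF u) (vertex hF v) (segment_vertex_subset_of_adj hF h)
  map_comp_map_symm {u v} h := by
    have hu : segment ℝ (vertex hF u : V → ℝ) (vertex hF u) ⊆ geomRealization F := by
      rw [segment_same]
      exact singleton_subset_iff.2 (vertex hF u).2
    rw [← segmentHom_self (vertex hF u) hu]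
    exact segmentHom_comp_segmentHom (face_subset (hF (pair_mem_flagComplexTwoSkeleton h)))
      (convex_face _) (single_mem_face (by simp)) (single_mem_face (by simp))
      (single_mem_face (by simp)) _ _ _
  map_comp_map huv hvw huw :=
    segmentHom_comp_segmentHom (face_subset (hF (triple_mem_flagComplexTwoSkeleton huv hvw huw)))
      (convex_face _) (single_mem_face (by simp)) (single_mem_face (by simp))
      (single_mem_face (by simp)) _ _ _

theorem segment_vertex_subset_of_mem_openStar {v : V} {x : V → ℝ} (hx : x ∈ openStar F v) :
    segment ℝ (vertex hF v : V → ℝ) x ⊆ geomRealization F :=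
  ((starConvex_openStar v).segment_subset hx).trans openStar_subset

/-- The class of the straight path from a vertex to a point of its open star. -/
noncomputable def spoke {v : V} {x : geomRealization F} (hx : (x : V → ℝ) ∈ openStar F v) :
    (edgeConnection hF).obj v ⟶ FundamentalGroupoid.mk x :=
  segmentHom (vertex hF v) x (segment_vertex_subset_of_mem_openStar hF hx)

theorem spoke_comp_fromPath {v : V} {x y : geomRealization F} (hx : (x : V → ℝ) ∈ openStar F v)
    (hy : (y : V → ℝ) ∈ openStar F v) (p : Path x y) (hp : ∀ t, (p t : V → ℝ) ∈ openStar F v) :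
    spoke hF hx ≫ fromPath (.mk p) = spoke hF hy :=
  segmentHom_comp_fromPath openStar_subset (starConvex_openStar v) p hp _ _

theorem exists_transport_comp_spoke (hclique : ∀ σ ∈ F, G.IsClique (σ : Set V)) {v w : V}
    {x : geomRealization F} (hv : (x : V → ℝ) ∈ openStar F v) (hw : (x : V → ℝ) ∈ openStar F w) :
    ∃ a : G.Walk v w, spoke hF hv = (edgeConnection hF).transport a ≫ spoke hF hw := by
  obtain rfl | hvw := eq_or_ne v w
  · exact ⟨.nil, by simp⟩
  obtain ⟨σ, hσ, hxσ⟩ := mem_iff.1 x.2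
  have hvσ := mem_of_mem_face_of_pos hxσ hv.2
  have hwσ := mem_of_mem_face_of_pos hxσ hw.2
  have hadj : G.Adj v w := hclique σ hσ hvσ hwσ hvw
  refine ⟨hadj.toWalk, ?_⟩
  simp only [SimpleGraph.Adj.toWalk, FlatConnection.transport_cons, FlatConnection.transport_nil,
    Category.comp_id]
  exact (segmentHom_comp_segmentHom (face_subset hσ) (convex_face σ) (single_mem_face hvσ)
    (single_mem_face hwσ) hxσ _ _ _).symm

/-- The homotopy classes of paths that become edge paths when their endpoints are joined by spokes
to vertices whose open stars contain them, for every choice of these vertices. -/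
def edgePathClasses : MorphismProperty (FundamentalGroupoid (geomRealization F)) :=
  fun x y f => ∀ ⦃v w : V⦄ (hx : (x.as : V → ℝ) ∈ openStar F v)
    (hy : (y.as : V → ℝ) ∈ openStar F w),
    ∃ a : G.Walk v w, spoke hF hx ≫ f = (edgeConnection hF).transport a ≫ spoke hF hy

instance : (edgePathClasses hF).IsStableUnderComposition where
  comp_mem {x y z} f g hf hg v w hx hz := by
    obtain ⟨u, hy⟩ := exists_mem_openStar y.as
    obtain ⟨a, ha⟩ := hf hx hy
    obtain ⟨b, hb⟩ := hg hy hz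
    refine ⟨a.append b, ?_⟩
    calc spoke hF hx ≫ f ≫ g
        = (edgeConnection hF).transport a ≫ spoke hF hy ≫ g := by
          rw [← Category.assoc, ha, Category.assoc]
      _ = (edgeConnection hF).transport (a.append b) ≫ spoke hF hz := by
          rw [hb, FlatConnection.transport_append, Category.assoc]

theorem edgePathClasses_of_mem_openStar (hclique : ∀ σ ∈ F, G.IsClique (σ : Set V)) {i : V}
    {x y : geomRealization F} (p : Path x y) (hp : ∀ t, (p t : V → ℝ) ∈ openStar F i) :
    edgePathClasses hF (fromPath (.mk p)) := by
  intro v w hx hy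
  have hxi : (x : V → ℝ) ∈ openStar F i := by simpa using hp 0
  have hyi : (y : V → ℝ) ∈ openStar F i := by simpa using hp 1
  obtain ⟨a, ha⟩ := exists_transport_comp_spoke hF hclique hx hxi
  obtain ⟨b, hb⟩ := exists_transport_comp_spoke hF hclique hyi hy
  refine ⟨a.append b, ?_⟩
  calc spoke hF hx ≫ fromPath (.mk p)
      = (edgeConnection hF).transport a ≫ spoke hF hxi ≫ fromPath (.mk p) := by
        rw [ha, Category.assoc]
    _ = (edgeConnection hF).transport a ≫ spoke hF hyi := by
        rw [spoke_comp_fromPath hF hxi hyi p hp]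
    _ = (edgeConnection hF).transport (a.append b) ≫ spoke hF hy := by
        rw [hb, FlatConnection.transport_append, Category.assoc]

theorem edgePathClasses_fromPath (hclique : ∀ σ ∈ F, G.IsClique (σ : Set V))
    {x y : geomRealization F} (p : Path x y) : edgePathClasses hF (fromPath (.mk p)) :=
  morphismProperty_of_openCover isOpen_preimage_openStar exists_mem_openStar (edgePathClasses hF)
    (fun _ _ _ q hq => edgePathClasses_of_mem_openStar hF hclique q hq) p

end EdgePaths

section Homotopy

variable {V : Type*} [DecidableEq V] {G : SimpleGraph V} {F : Set (Finset V)}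

theorem homotopic_of_isChordal (hF : flagComplexTwoSkeleton G ⊆ F) (hG : G.IsChordal)
    (hclique : ∀ σ ∈ F, G.IsClique (σ : Set V)) {x y : geomRealization F} (p q : Path x y) :
    p.Homotopic q := by
  obtain ⟨v, hv⟩ := exists_mem_openStar x
  obtain ⟨w, hw⟩ := exists_mem_openStar y
  obtain ⟨a, ha⟩ := edgePathClasses_fromPath hF hclique p hv hw
  obtain ⟨b, hb⟩ := edgePathClasses_fromPath hF hclique q hv hw
  rw [← fromPath_eq_iff_homotopic, ← cancel_epi (spoke hF hv), ha, hb,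
    (edgeConnection hF).transport_eq_of_isChordal hG a b]

theorem pathConnectedSpace_of_connected (hF : flagComplexTwoSkeleton G ⊆ F) (hG : G.Connected) :
    PathConnectedSpace (geomRealization F) := by
  obtain ⟨v₀⟩ := hG.nonempty
  refine ⟨⟨vertex hF v₀⟩, fun x y => ?_⟩
  obtain ⟨v, hv⟩ := exists_mem_openStar x
  obtain ⟨w, hw⟩ := exists_mem_openStar y
  obtain ⟨a⟩ := hG.preconnected v w
  let f : FundamentalGroupoid.mk x ⟶ FundamentalGroupoid.mk y :=
    Groupoid.inv (spoke hF hv) ≫ (edgeConnection hF).transport a ≫ spoke hF hw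
  obtain ⟨p, _⟩ := Path.Homotopic.Quotient.mk_surjective f
  exact ⟨p⟩

end Homotopy

end geomRealization

/-- For infinite `V` the realization carries the topology of pointwise convergence of barycentric
coordinates, which is coarser than the weak topology. -/
theorem flagComplexTwoSkeleton_simplyConnected_general {V : Type*} [DecidableEq V]
    (G : SimpleGraph V) (hc : G.IsChordal) {F : Set (Finset V)}
    (hF : flagComplexTwoSkeleton G ⊆ F) (hclique : ∀ σ ∈ F, G.IsClique (σ : Set V)) :
    (∀ x : geomRealization F, SimplyConnectedSpace (connectedComponent x)) ∧
    (G.Connected → SimplyConnectedSpace (geomRealization F)) := by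
  have homotopic {x y : geomRealization F} (p q : Path x y) : p.Homotopic q :=
    geomRealization.homotopic_of_isChordal hF hc hclique p q
  refine ⟨fun x => ?_, fun hG => ?_⟩
  · rw [connectedComponent_eq_pathComponent_of_mem_nhds geomRealization.pathComponent_mem_nhds]
    exact isSimplyConnected_pathComponent (fun y p => homotopic p (Path.refl y)) x
  · exact simply_connected_iff_paths_homotopic'.2
      ⟨geomRealization.pathConnectedSpace_of_connected hF hG, homotopic⟩

/-- If `G` is a finite chordal graph, then every connected component of the geometric
realization of the 2-skeleton of the flag complex of `G` is simply connected; in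
particular, if `G` is moreover connected then this geometric realization itself is
simply connected. -/
theorem flagComplexTwoSkeleton_simplyConnected {V : Type*} [Fintype V] [DecidableEq V]
    (G : SimpleGraph V) (hc : G.IsChordal) :
    (∀ x : geomRealization (flagComplexTwoSkeleton G),
      SimplyConnectedSpace (connectedComponent x)) ∧
    (G.Connected → SimplyConnectedSpace (geomRealization (flagComplexTwoSkeleton G))) :=
  flagComplexTwoSkeleton_simplyConnected_general G hc subset_rfl fun _ hσ => hσ.1
end

section
/- Let K be the simplicial complex on the vertex set {1,2,3,4} whose faces are exactly the subsets of {1,2,3} and the subsets of {3,4}. Then its moment-angle complex Z_K = (D² × D² × D² × S¹) ∪ (S¹ × S¹ × D² × D²), a subspace of (D²)⁴, is homotopy equivalent to the join (S¹ × S¹) * S¹ of the 2-torus with the circle. -/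
/-- The setoid on `X × [0,1] × Y` defining the topological join `X * Y`: the
identifications are `(x,0,y) ∼ (x,0,y′)` and `(x,1,y) ∼ (x′,1,y)`. -/
def joinSetoid (X Y : Type*) : Setoid (X × unitInterval × Y) where
  r a b := a = b ∨ (a.2.1 = 0 ∧ b.2.1 = 0 ∧ a.1 = b.1) ∨
    (a.2.1 = 1 ∧ b.2.1 = 1 ∧ a.2.2 = b.2.2)
  iseqv := by
    have h01 : (0 : unitInterval) ≠ 1 := by
      intro h
      have := congrArg Subtype.val h
      norm_num at this
    refine ⟨fun a => Or.inl rfl, ?_, ?_⟩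
    · rintro a b (rfl | ⟨h1, h2, h3⟩ | ⟨h1, h2, h3⟩)
      · exact Or.inl rfl
      · exact Or.inr (Or.inl ⟨h2, h1, h3.symm⟩)
      · exact Or.inr (Or.inr ⟨h2, h1, h3.symm⟩)
    · rintro a b c (rfl | ⟨h1, h2, h3⟩ | ⟨h1, h2, h3⟩) (rfl | ⟨h4, h5, h6⟩ | ⟨h4, h5, h6⟩)
      · exact Or.inl rfl
      · exact Or.inr (Or.inl ⟨h4, h5, h6⟩)
      · exact Or.inr (Or.inr ⟨h4, h5, h6⟩)
      · exact Or.inr (Or.inl ⟨h1, h2, h3⟩)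
      · exact Or.inr (Or.inl ⟨h1, h5, h3.trans h6⟩)
      · exact absurd (h2.symm.trans h4) h01
      · exact Or.inr (Or.inr ⟨h1, h2, h3⟩)
      · exact absurd (h2.symm.trans h4) (fun h => h01 h.symm)
      · exact Or.inr (Or.inr ⟨h1, h5, h3.trans h6⟩)

/-- The topological join `X * Y`: the quotient of `X × [0,1] × Y` by the identifications
`(x,0,y) ∼ (x,0,y′)` and `(x,1,y) ∼ (x′,1,y)`. -/
def TopJoin (X Y : Type*) [TopologicalSpace X] [TopologicalSpace Y] : Type _ :=
  Quotient (joinSetoid X Y)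

instance (X Y : Type*) [TopologicalSpace X] [TopologicalSpace Y] :
    TopologicalSpace (TopJoin X Y) :=
  instTopologicalSpaceQuotient

/-- The moment-angle complex of a simplicial complex `K` on `[m]`, a subspace of
`(D²)^m ⊆ ℂ^m`: the union over the faces `σ ∈ K` of the products `Y₁ × ⋯ × Y_m` with
`Y_i = D²` for `i ∈ σ` and `Y_i = S¹` for `i ∉ σ`. -/
def momentAngleComplex {m : ℕ} (K : Set (Finset (Fin m))) : Set (Fin m → ℂ) :=
  ⋃ σ ∈ K, { z : Fin m → ℂ | ∀ i : Fin m,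
    if i ∈ σ then z i ∈ Metric.closedBall (0 : ℂ) 1 else z i ∈ Metric.sphere (0 : ℂ) 1 }

/-- The simplicial complex on `{1,2,3,4}` whose faces are exactly the subsets of
`{1,2,3}` and the subsets of `{3,4}` (written with `Fin 4 = {0,1,2,3}`). -/
def Kex : Set (Finset (Fin 4)) :=
  { σ : Finset (Fin 4) | σ ⊆ {0, 1, 2} ∨ σ ⊆ {2, 3} }

/-!
If two proper simplices `σ` and `τ` cover the vertex set, then `Z_K` consists of the points of the
polydisc having all coordinates outside `σ`, or all coordinates outside `τ`, on the unit circle.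
Contract the coordinates in `σ ∩ τ` to `0` and scale each coordinate outside `τ` by the norms of
the other coordinates outside `τ`, and similarly for `σ`. A block of coordinates that lies on its
torus does not move, so straight lines stay in `Z_K`, which is thus homotopy equivalent to
`CX × Y ∪ X × CY`, where `X` and `Y` are the tori of coordinates outside `τ` and outside `σ` and
`C` is the cone with apex `0`. As points of `X` and `Y` have norm one, `CX × Y ∪ X × CY` is `X * Y`:
the join parameter runs through the pairs of scaling factors on the path
`(1, 0) → (1, 1) → (0, 1)`.
-/

open Metric Set
open scoped Pointwise ContinuousMap

section StraightLineHomotopy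

variable {A V : Type*} [TopologicalSpace A] [AddCommGroup V] [TopologicalSpace V]
  [IsTopologicalAddGroup V] [Module ℝ V] [ContinuousSMul ℝ V]

theorem homotopic_of_segment_subset {S : Set V} (f g : C(A, S))
    (h : ∀ a, segment ℝ (f a : V) (g a) ⊆ S) : f.Homotopic g := by
  let incl : C(S, V) := ⟨Subtype.val, continuous_subtype_val⟩
  let H := ContinuousMap.Homotopy.affine (incl.comp f) (incl.comp g)
  have hH (p : unitInterval × A) : H p ∈ S := by
    refine h p.2 ?_
    rw [segment_eq_image_lineMap]
    exact ⟨p.1, p.1.2, rfl⟩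
  exact ⟨{
    toFun p := ⟨H p, hH p⟩
    continuous_toFun := H.continuous.subtype_mk hH
    map_zero_left a := Subtype.ext (H.map_zero_left a)
    map_one_left a := Subtype.ext (H.map_one_left a) }⟩

end StraightLineHomotopy

section Cone

variable {E F : Type*} [AddCommGroup E] [Module ℝ E] [AddCommGroup F] [Module ℝ F]

/-- The cone over a subset `X` of a real vector space with apex the origin. -/
def originCone (X : Set E) : Set E :=
  Icc (0 : ℝ) 1 • X

theorem smul_mem_originCone {X : Set E} {x : E} (hx : x ∈ X) {s : ℝ} (hs : s ∈ Icc (0 : ℝ) 1) :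
    s • x ∈ originCone X :=
  smul_mem_smul hs hx

theorem segment_smul_subset_originCone {X : Set E} {x : E} (hx : x ∈ X) {s t : ℝ}
    (hs : s ∈ Icc (0 : ℝ) 1) (ht : t ∈ Icc (0 : ℝ) 1) :
    segment ℝ (s • x) (t • x) ⊆ originCone X := by
  rintro _ ⟨a, b, ha, hb, hab, rfl⟩
  rw [smul_smul, smul_smul, ← add_smul]
  exact smul_mem_originCone hx (convex_Icc 0 1 hs ht ha hb hab)

/-- The union `CX × Y ∪ X × CY`, where `C` denotes the cone from the origin; for compact
subsets of unit spheres it models the join of `X` and `Y`. -/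
def coneJoin (X : Set E) (Y : Set F) : Set (E × F) :=
  originCone X ×ˢ Y ∪ X ×ˢ originCone Y

end Cone

namespace TopJoin

variable {X X' Y Y' : Type*} [TopologicalSpace X] [TopologicalSpace X'] [TopologicalSpace Y]
  [TopologicalSpace Y']

/-- The homeomorphism of joins induced by homeomorphisms of the two factors. -/
def congr (e : X ≃ₜ X') (e' : Y ≃ₜ Y') : TopJoin X Y ≃ₜ TopJoin X' Y' :=
  Homeomorph.Quotient.congr (e.prodCongr ((Homeomorph.refl unitInterval).prodCongr e'))
    fun p q => by
      change (p = q ∨ _) ↔ (_ = _ ∨ _)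
      simp [Prod.ext_iff]

end TopJoin

section JoinModel

variable {X Y E F : Type*} [NormedAddCommGroup E] [NormedSpace ℝ E] [NormedAddCommGroup F]
  [NormedSpace ℝ F] {f : X → E} {g : Y → F}

/-- The map `X × [0,1] × Y → E × F` which at time `t` scales `f x` and `g y` by the coordinates
of the path from `(1, 0)` through `(1, 1)` to `(0, 1)`. -/
noncomputable def joinMap (f : X → E) (g : Y → F) (p : X × unitInterval × Y) : E × F :=
  (min 1 (2 * (1 - (p.2.1 : ℝ))) • f p.1, min 1 (2 * (p.2.1 : ℝ)) • g p.2.2)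

theorem continuous_joinMap [TopologicalSpace X] [TopologicalSpace Y] (hf : Continuous f)
    (hg : Continuous g) : Continuous (joinMap f g) := by
  unfold joinMap
  fun_prop

theorem joinMap_time (hf : ∀ x, ‖f x‖ = 1) (hg : ∀ y, ‖g y‖ = 1) (p : X × unitInterval × Y) :
    (p.2.1 : ℝ) = (1 - ‖(joinMap f g p).1‖ + ‖(joinMap f g p).2‖) / 2 := by
  obtain ⟨x, ⟨t, h0, h1⟩, y⟩ := p
  have hl : 0 ≤ min 1 (2 * (1 - t)) := le_min zero_le_one (by linarith)
  have hr : 0 ≤ min 1 (2 * t) := le_min zero_le_one (by linarith)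
  simp only [joinMap, norm_smul, hf, hg, Real.norm_of_nonneg hl, Real.norm_of_nonneg hr, mul_one]
  grind

theorem ker_joinMap (hf : ∀ x, ‖f x‖ = 1) (hg : ∀ y, ‖g y‖ = 1) (hf' : f.Injective)
    (hg' : g.Injective) : Setoid.ker (joinMap f g) = joinSetoid X Y := by
  ext ⟨x, t, y⟩ ⟨x', t', y'⟩
  change joinMap f g _ = joinMap f g _ ↔ (_ = _ ∨ _)
  constructor
  · intro h
    have htime : (t : ℝ) = t' :=
      (joinMap_time hf hg (x, t, y)).trans (h ▸ (joinMap_time hf hg (x', t', y')).symm)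
    obtain rfl : t = t' := Subtype.ext htime
    have hx (ht : t ≠ 1) : x = x' := by
      have ht1 : (t : ℝ) < 1 := unitInterval.lt_one_iff_ne_one.2 ht
      have hpos : 0 < min 1 (2 * (1 - (t : ℝ))) := lt_min one_pos (by linarith)
      exact hf' (smul_right_injective E hpos.ne' (congrArg Prod.fst h))
    have hy (ht : t ≠ 0) : y = y' := by
      have ht0 : 0 < (t : ℝ) := unitInterval.pos_iff_ne_zero.2 ht
      have hpos : 0 < min 1 (2 * (t : ℝ)) := lt_min one_pos (by linarith)
      exact hg' (smul_right_injective F hpos.ne' (congrArg Prod.snd h))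
    have h01 : (0 : unitInterval) ≠ 1 := zero_ne_one
    grind
  · rintro (h | ⟨h, h', rfl⟩ | ⟨h, h', rfl⟩)
    · rw [h]
    all_goals
      dsimp only at h h'
      simp [joinMap, h, h']

theorem range_joinMap : range (joinMap f g) = coneJoin (range f) (range g) := by
  apply Subset.antisymm
  · rintro _ ⟨⟨x, ⟨t, h0, h1⟩, y⟩, rfl⟩
    rcases le_total t (1 / 2) with ht | ht
    · right
      refine ⟨⟨x, ?_⟩, smul_mem_originCone (mem_range_self y) ⟨?_, min_le_left _ _⟩⟩
      · simp [joinMap, min_eq_left (show 1 ≤ 2 * (1 - t) by linarith)]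
      · exact le_min zero_le_one (by simpa using h0)
    · left
      refine ⟨smul_mem_originCone (mem_range_self x) ⟨?_, min_le_left _ _⟩, ⟨y, ?_⟩⟩
      · exact le_min zero_le_one (by simpa using h1)
      · simp [joinMap, min_eq_left (show 1 ≤ 2 * t by linarith)]
  · rintro ⟨_, _⟩ (⟨⟨s, ⟨h0, h1⟩, _, ⟨x, rfl⟩, rfl⟩, y, rfl⟩ |
      ⟨⟨x, rfl⟩, s, ⟨h0, h1⟩, _, ⟨y, rfl⟩, rfl⟩)
    · refine ⟨(x, ⟨1 - s / 2, by linarith, by linarith⟩, y), ?_⟩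
      have hr : 1 ≤ 2 * (1 - s / 2) := by linarith
      simp [joinMap, min_eq_left hr, mul_div_cancel₀, h1]
    · refine ⟨(x, ⟨s / 2, by linarith, by linarith⟩, y), ?_⟩
      have hl : 1 ≤ 2 * (1 - s / 2) := by linarith
      simp [joinMap, min_eq_left hl, mul_div_cancel₀, h1]

theorem TopJoin.nonempty_homeomorph_coneJoin [TopologicalSpace X] [TopologicalSpace Y]
    [CompactSpace X] [CompactSpace Y] (hf : ∀ x, ‖f x‖ = 1) (hg : ∀ y, ‖g y‖ = 1)
    (hfc : Continuous f) (hgc : Continuous g) (hf' : f.Injective) (hg' : g.Injective) :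
    Nonempty (TopJoin X Y ≃ₜ coneJoin (range f) (range g)) := by
  let Φ : C(X × unitInterval × Y, range (joinMap f g)) :=
    ⟨rangeFactorization (joinMap f g), (continuous_joinMap hfc hgc).subtype_mk _⟩
  have hΦ : Topology.IsQuotientMap Φ :=
    Φ.continuous.isClosedMap.isQuotientMap Φ.continuous rangeFactorization_surjective
  have hker : joinSetoid X Y = Setoid.ker Φ := by
    rw [← ker_joinMap hf hg hf' hg']
    ext p q
    exact (Subtype.ext_iff (a1 := Φ p) (a2 := Φ q)).symm
  rw [← range_joinMap]
  exact ⟨(Homeomorph.Quotient.congrRight fun p q => by rw [hker]).trans hΦ.homeomorph⟩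

end JoinModel

section Polysphere

variable {ι E : Type*} [NormedAddCommGroup E]

/-- The product of unit spheres in `ι → E`; for `E = ℂ` it is a torus. -/
def polysphere (ι E : Type*) [NormedAddCommGroup E] : Set (ι → E) :=
  {z | ∀ i, ‖z i‖ = 1}

theorem range_coe_sphere_pi :
    range (fun (x : ι → sphere (0 : E) 1) i => (x i : E)) = polysphere ι E := by
  ext z
  constructor
  · rintro ⟨x, rfl⟩ i
    exact norm_eq_of_mem_sphere (x i)
  · intro hz
    exact ⟨fun i => ⟨z i, mem_sphere_zero_iff_norm.2 (hz i)⟩, rfl⟩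

theorem norm_apply_le_one_of_mem_originCone [NormedSpace ℝ E] {z : ι → E}
    (hz : z ∈ originCone (polysphere ι E)) (i : ι) : ‖z i‖ ≤ 1 := by
  obtain ⟨s, hs, w, hw, rfl⟩ := hz
  simpa [norm_smul, hw i, abs_of_nonneg hs.1] using hs.2

variable [Fintype ι]

theorem norm_eq_one_of_mem_polysphere [Nonempty ι] {z : ι → E} (hz : z ∈ polysphere ι E) :
    ‖z‖ = 1 := by
  apply le_antisymm
  · exact (pi_norm_le_iff_of_nonneg zero_le_one).2 fun i => (hz i).le
  · obtain ⟨i⟩ := ‹Nonempty ι›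
    exact (hz i).symm.le.trans (norm_le_pi_norm z i)

variable [DecidableEq ι] [NormedSpace ℝ E]

/-- Scales each coordinate by the product of the norms of the other ones, so that all the
coordinates of the result have the same norm. -/
noncomputable def equalizeNorms (z : ι → E) : ι → E :=
  fun i => (∏ j ∈ Finset.univ.erase i, ‖z j‖) • z i

theorem continuous_equalizeNorms : Continuous (equalizeNorms : (ι → E) → ι → E) := by
  unfold equalizeNorms
  fun_prop

theorem equalizeNorms_of_mem_polysphere {z : ι → E} (hz : z ∈ polysphere ι E) :
    equalizeNorms z = z := by
  ext i
  simp [equalizeNorms, Finset.prod_congr rfl fun j _ => hz j]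

theorem equalizeNorms_smul_of_mem_polysphere {r : ι → ℝ} {w : ι → E} (hr : ∀ i, 0 ≤ r i)
    (hw : w ∈ polysphere ι E) : equalizeNorms (fun i => r i • w i) = (∏ i, r i) • w := by
  ext i
  have hnorm (j : ι) : ‖r j • w j‖ = r j := by
    rw [norm_smul, hw j, mul_one, Real.norm_of_nonneg (hr j)]
  simp only [equalizeNorms, hnorm, smul_smul, Pi.smul_apply]
  rw [Finset.prod_erase_mul _ _ (Finset.mem_univ i)]

theorem norm_equalizeNorms_le {z : ι → E} (hz : ∀ i, ‖z i‖ ≤ 1) (i : ι) :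
    ‖equalizeNorms z i‖ ≤ 1 := by
  have hprod : ∏ j ∈ Finset.univ.erase i, ‖z j‖ ≤ 1 :=
    Finset.prod_le_one (fun j _ => norm_nonneg _) fun j _ => hz j
  rw [equalizeNorms, norm_smul, Real.norm_of_nonneg (by positivity)]
  exact mul_le_one₀ hprod (norm_nonneg _) (hz i)

theorem exists_norm_smul_eq [Nontrivial E] (x : E) : ∃ w : E, ‖w‖ = 1 ∧ ‖x‖ • w = x := by
  rcases eq_or_ne x 0 with rfl | hx
  · obtain ⟨w, hw⟩ := exists_norm_eq E zero_le_one
    exact ⟨w, hw, by simp⟩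
  · exact ⟨‖x‖⁻¹ • x, norm_smul_inv_norm hx, smul_inv_smul₀ (norm_ne_zero_iff.2 hx) x⟩

theorem equalizeNorms_mem_originCone [Nontrivial E] {z : ι → E} (hz : ∀ i, ‖z i‖ ≤ 1) :
    equalizeNorms z ∈ originCone (polysphere ι E) := by
  choose w hnorm hwz using fun i => exists_norm_smul_eq (z i)
  have hw : w ∈ polysphere ι E := hnorm
  have heq := equalizeNorms_smul_of_mem_polysphere (fun i => norm_nonneg (z i)) hw
  simp only [hwz] at heq
  rw [heq]
  exact smul_mem_originCone hw ⟨Finset.prod_nonneg fun i _ => norm_nonneg _,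
    Finset.prod_le_one (fun i _ => norm_nonneg _) fun i _ => hz i⟩

theorem segment_equalizeNorms_subset_originCone {z : ι → E}
    (hz : z ∈ originCone (polysphere ι E)) :
    segment ℝ (equalizeNorms z) z ⊆ originCone (polysphere ι E) := by
  obtain ⟨s, hs, w, hw, rfl⟩ := hz
  have heq : equalizeNorms (s • w) = s ^ Fintype.card ι • w := by
    simpa [Pi.smul_def] using equalizeNorms_smul_of_mem_polysphere (fun _ : ι => hs.1) hw
  simp only [heq]
  exact segment_smul_subset_originCone hw ⟨pow_nonneg hs.1 _, pow_le_one₀ hs.1 hs.2⟩ hs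

theorem segment_equalizeNorms_subset_coneJoin {κ F : Type*} [Fintype κ] [DecidableEq κ]
    [NormedAddCommGroup F] [NormedSpace ℝ F] {x : ι → E} {y : κ → F}
    (hxy : (x, y) ∈ coneJoin (polysphere ι E) (polysphere κ F)) :
    segment ℝ (equalizeNorms x, equalizeNorms y) (x, y) ⊆
      coneJoin (polysphere ι E) (polysphere κ F) := by
  refine (Prod.segment_subset ..).trans ?_
  rcases hxy with ⟨hx, hy⟩ | ⟨hx, hy⟩
  · apply subset_union_of_subset_left
    simpa only [equalizeNorms_of_mem_polysphere hy, segment_same] using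
      prod_mono (segment_equalizeNorms_subset_originCone hx) (singleton_subset_iff.2 hy)
  · apply subset_union_of_subset_right
    simpa only [equalizeNorms_of_mem_polysphere hx, segment_same] using
      prod_mono (singleton_subset_iff.2 hx) (segment_equalizeNorms_subset_originCone hy)

end Polysphere

section TwoFacets

variable {m : ℕ} {σ τ : Finset (Fin m)}

theorem mem_momentAngleComplex {K : Set (Finset (Fin m))} {z : Fin m → ℂ} :
    z ∈ momentAngleComplex K ↔ ∃ ρ ∈ K, ∀ i, ‖z i‖ ≤ 1 ∧ (i ∉ ρ → ‖z i‖ = 1) := by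
  simp only [momentAngleComplex, mem_iUnion₂, exists_prop]
  refine exists_congr fun ρ => and_congr_right fun _ => forall_congr' fun i => ?_
  split_ifs with hi <;> simp +contextual [hi]

theorem mem_momentAngleComplex_Iic {z : Fin m → ℂ} :
    z ∈ momentAngleComplex (Iic σ) ↔ ∀ i, ‖z i‖ ≤ 1 ∧ (i ∉ σ → ‖z i‖ = 1) := by
  rw [mem_momentAngleComplex]
  constructor
  · rintro ⟨ρ, hρ, h⟩ i
    exact ⟨(h i).1, fun hi => (h i).2 fun hiρ => hi (hρ hiρ)⟩
  · intro h
    exact ⟨σ, self_mem_Iic, h⟩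

theorem mem_momentAngleComplex_Iic_union_Iic {z : Fin m → ℂ} :
    z ∈ momentAngleComplex (Iic σ ∪ Iic τ) ↔ (∀ i, ‖z i‖ ≤ 1) ∧
      ((fun i : {i // i ∉ σ} => z i) ∈ polysphere {i // i ∉ σ} ℂ ∨
        (fun i : {i // i ∉ τ} => z i) ∈ polysphere {i // i ∉ τ} ℂ) := by
  have hunion : momentAngleComplex (Iic σ ∪ Iic τ) =
      momentAngleComplex (Iic σ) ∪ momentAngleComplex (Iic τ) := biUnion_union ..
  simp only [hunion, mem_union, mem_momentAngleComplex_Iic, polysphere, mem_ofPred_eq,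
    Subtype.forall]
  grind

/-- The model `CX × Y ∪ X × CY` of the join of the tori `X` and `Y` whose coordinates are the
vertices outside `τ` and outside `σ` respectively. -/
abbrev torusConeJoin (σ τ : Finset (Fin m)) :
    Set (({i // i ∉ τ} → ℂ) × ({i // i ∉ σ} → ℂ)) :=
  coneJoin (polysphere {i // i ∉ τ} ℂ) (polysphere {i // i ∉ σ} ℂ)

/-- Forgets the coordinates in `σ ∩ τ` and maps the two remaining polydiscs to the cones over their
tori. -/
noncomputable def equalizeOutside (σ τ : Finset (Fin m)) (z : Fin m → ℂ) :
    ({i // i ∉ τ} → ℂ) × ({i // i ∉ σ} → ℂ) :=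
  (equalizeNorms fun i => z i, equalizeNorms fun i => z i)

/-- The inclusion of coordinate subspaces that vanishes on the coordinates in `σ ∩ τ`. -/
noncomputable def extendByZero (w : ({i // i ∉ τ} → ℂ) × ({i // i ∉ σ} → ℂ)) (i : Fin m) : ℂ :=
  if hτ : i ∉ τ then w.1 ⟨i, hτ⟩ else if hσ : i ∉ σ then w.2 ⟨i, hσ⟩ else 0

theorem continuous_equalizeOutside : Continuous (equalizeOutside σ τ) := by
  refine .prodMk ?_ ?_ <;> exact continuous_equalizeNorms.comp (by fun_prop)

theorem continuous_extendByZero :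
    Continuous (extendByZero : ({i // i ∉ τ} → ℂ) × ({i // i ∉ σ} → ℂ) → Fin m → ℂ) := by
  refine continuous_pi fun i => ?_
  unfold extendByZero
  split_ifs <;> fun_prop

theorem extendByZero_of_notMem_right (w : ({i // i ∉ τ} → ℂ) × ({i // i ∉ σ} → ℂ))
    (i : {i // i ∉ τ}) : extendByZero w i = w.1 i :=
  dif_pos i.2

theorem extendByZero_of_notMem_left (h : σ ∪ τ = Finset.univ)
    (w : ({i // i ∉ τ} → ℂ) × ({i // i ∉ σ} → ℂ)) (i : {i // i ∉ σ}) :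
    extendByZero w i = w.2 i := by
  have hτ : (i : Fin m) ∈ τ := (Finset.mem_union.1 (h ▸ Finset.mem_univ _)).resolve_left i.2
  simp [extendByZero, hτ, i.2]

theorem norm_extendByZero_le {w : ({i // i ∉ τ} → ℂ) × ({i // i ∉ σ} → ℂ)}
    (h₁ : ∀ i, ‖w.1 i‖ ≤ 1) (h₂ : ∀ i, ‖w.2 i‖ ≤ 1) (i : Fin m) : ‖extendByZero w i‖ ≤ 1 := by
  unfold extendByZero
  split_ifs
  exacts [by simp, h₂ _, h₁ _]

theorem equalizeOutside_mem_torusConeJoin {z : Fin m → ℂ}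
    (hz : z ∈ momentAngleComplex (Iic σ ∪ Iic τ)) :
    equalizeOutside σ τ z ∈ torusConeJoin σ τ := by
  obtain ⟨hdisc, hσ | hτ⟩ := mem_momentAngleComplex_Iic_union_Iic.1 hz
  · refine .inl ⟨equalizeNorms_mem_originCone fun i => hdisc i, ?_⟩
    simpa only [equalizeOutside, equalizeNorms_of_mem_polysphere hσ] using hσ
  · refine .inr ⟨?_, equalizeNorms_mem_originCone fun i => hdisc i⟩
    simpa only [equalizeOutside, equalizeNorms_of_mem_polysphere hτ] using hτ

theorem extendByZero_mem_momentAngleComplex (h : σ ∪ τ = Finset.univ)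
    {w : ({i // i ∉ τ} → ℂ) × ({i // i ∉ σ} → ℂ)} (hw : w ∈ torusConeJoin σ τ) :
    extendByZero w ∈ momentAngleComplex (Iic σ ∪ Iic τ) := by
  rw [mem_momentAngleComplex_Iic_union_Iic]
  simp only [extendByZero_of_notMem_right, extendByZero_of_notMem_left h]
  rcases hw with ⟨h₁, h₂⟩ | ⟨h₁, h₂⟩
  · exact ⟨norm_extendByZero_le (norm_apply_le_one_of_mem_originCone h₁) fun i => (h₂ i).le,
      .inl h₂⟩
  · exact ⟨norm_extendByZero_le (fun i => (h₁ i).le) (norm_apply_le_one_of_mem_originCone h₂),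
      .inr h₁⟩

theorem segment_extendByZero_equalizeOutside_subset (h : σ ∪ τ = Finset.univ) {z : Fin m → ℂ}
    (hz : z ∈ momentAngleComplex (Iic σ ∪ Iic τ)) :
    segment ℝ (extendByZero (equalizeOutside σ τ z)) z ⊆
      momentAngleComplex (Iic σ ∪ Iic τ) := by
  intro v hv
  rw [mem_momentAngleComplex_Iic_union_Iic] at hz ⊢
  obtain ⟨hdisc, htorus⟩ := hz
  have hv_segment (i : Fin m) : v i ∈ segment ℝ (extendByZero (equalizeOutside σ τ z) i) (z i) :=
    Pi.segment_subset (s := univ) _ _ hv i (mem_univ i)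
  constructor
  · intro i
    have hball : ‖extendByZero (equalizeOutside σ τ z) i‖ ≤ 1 :=
      norm_extendByZero_le (w := equalizeOutside σ τ z)
        (norm_equalizeNorms_le fun i => hdisc i) (norm_equalizeNorms_le fun i => hdisc i) i
    simpa using (convex_closedBall (0 : ℂ) 1).segment_subset (by simpa using hball)
      (by simpa using hdisc i) (hv_segment i)
  · refine htorus.imp (fun hσ i => ?_) (fun hτ i => ?_)
    · have hvi : v i = z i := by
        simpa [extendByZero_of_notMem_left h, equalizeOutside, equalizeNorms_of_mem_polysphere hσ]
          using hv_segment i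
      simpa only [hvi] using hσ i
    · have hvi : v i = z i := by
        simpa [extendByZero_of_notMem_right, equalizeOutside, equalizeNorms_of_mem_polysphere hτ]
          using hv_segment i
      simpa only [hvi] using hτ i

theorem segment_equalizeOutside_extendByZero_subset (h : σ ∪ τ = Finset.univ)
    {w : ({i // i ∉ τ} → ℂ) × ({i // i ∉ σ} → ℂ)} (hw : w ∈ torusConeJoin σ τ) :
    segment ℝ (equalizeOutside σ τ (extendByZero w)) w ⊆ torusConeJoin σ τ := by
  simp only [equalizeOutside, extendByZero_of_notMem_right, extendByZero_of_notMem_left h]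
  exact segment_equalizeNorms_subset_coneJoin hw

/-- The homotopy equivalence between the moment-angle complex of two simplices covering the vertex
set and the model of the join of tori; both homotopies are straight lines. -/
noncomputable def momentAngleComplexHomotopyEquivTorusConeJoin (h : σ ∪ τ = Finset.univ) :
    momentAngleComplex (Iic σ ∪ Iic τ) ≃ₕ torusConeJoin σ τ where
  toFun := ⟨fun z => ⟨_, equalizeOutside_mem_torusConeJoin z.2⟩,
    (continuous_equalizeOutside.comp continuous_subtype_val).subtype_mk _⟩
  invFun := ⟨fun w => ⟨_, extendByZero_mem_momentAngleComplex h w.2⟩,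
    (continuous_extendByZero.comp continuous_subtype_val).subtype_mk _⟩
  left_inv := homotopic_of_segment_subset _ _ fun z =>
    segment_extendByZero_equalizeOutside_subset h z.2
  right_inv := homotopic_of_segment_subset _ _ fun w =>
    segment_equalizeOutside_extendByZero_subset h w.2

theorem nonempty_homeomorph_torusConeJoin (hσ : σ ≠ Finset.univ) (hτ : τ ≠ Finset.univ) :
    Nonempty (TopJoin ({i // i ∉ τ} → sphere (0 : ℂ) 1) ({i // i ∉ σ} → sphere (0 : ℂ) 1) ≃ₜ
      torusConeJoin σ τ) := by
  have : Nonempty {i // i ∉ σ} := by simpa [Finset.eq_univ_iff_forall] using hσ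
  have : Nonempty {i // i ∉ τ} := by simpa [Finset.eq_univ_iff_forall] using hτ
  rw [torusConeJoin, ← range_coe_sphere_pi, ← range_coe_sphere_pi]
  apply TopJoin.nonempty_homeomorph_coneJoin
  · exact fun x => norm_eq_one_of_mem_polysphere fun i => norm_eq_of_mem_sphere (x i)
  · exact fun y => norm_eq_one_of_mem_polysphere fun i => norm_eq_of_mem_sphere (y i)
  · fun_prop
  · fun_prop
  · exact Subtype.val_injective.comp_left
  · exact Subtype.val_injective.comp_left

theorem momentAngleComplex_homotopyEquiv_join_general (hσ : σ ≠ Finset.univ)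
    (hτ : τ ≠ Finset.univ) (h : σ ∪ τ = Finset.univ) :
    Nonempty (momentAngleComplex (Iic σ ∪ Iic τ) ≃ₕ
      TopJoin ({i // i ∉ τ} → sphere (0 : ℂ) 1) ({i // i ∉ σ} → sphere (0 : ℂ) 1)) := by
  obtain ⟨e⟩ := nonempty_homeomorph_torusConeJoin hσ hτ
  exact ⟨(momentAngleComplexHomotopyEquivTorusConeJoin h).trans e.symm.toHomotopyEquiv⟩

end TwoFacets

/-- Functions on a two-element type are pairs; the order of the two elements is chosen
arbitrarily. -/
noncomputable def piHomeomorphProdOfCardEqTwo {ι : Type*} [Fintype ι] (h : Fintype.card ι = 2)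
    (S : Type*) [TopologicalSpace S] : (ι → S) ≃ₜ S × S :=
  (Homeomorph.piCongrLeft (Y := fun _ => S) (Fintype.equivFinOfCardEq h)).trans
    Homeomorph.finTwoArrow

/-- Functions on a one-element type are points. -/
noncomputable def piHomeomorphOfCardEqOne {ι : Type*} [Fintype ι] (h : Fintype.card ι = 1)
    (S : Type*) [TopologicalSpace S] : (ι → S) ≃ₜ S :=
  (Homeomorph.piCongrLeft (Y := fun _ => S) (Fintype.equivFinOfCardEq h)).trans
    (Homeomorph.funUnique (Fin 1) S)

/-- The moment-angle complex of the complex with facets `{1,2,3}` and `{3,4}`, i.e.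
`Z_K = (D² × D² × D² × S¹) ∪ (S¹ × S¹ × D² × D²)`, is homotopy equivalent to the join
`(S¹ × S¹) * S¹` of the 2-torus with the circle. -/
theorem momentAngleComplex_homotopyEquiv_join :
    Nonempty (ContinuousMap.HomotopyEquiv (momentAngleComplex Kex)
      (TopJoin (Metric.sphere (0 : ℂ) 1 × Metric.sphere (0 : ℂ) 1)
        (Metric.sphere (0 : ℂ) 1))) := by
  have hK : Kex = Iic {0, 1, 2} ∪ Iic {2, 3} := rfl
  obtain ⟨e⟩ := momentAngleComplex_homotopyEquiv_join_general (σ := {0, 1, 2})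
    (τ := ({2, 3} : Finset (Fin 4))) (by decide) (by decide) (by decide)
  rw [hK]
  exact ⟨e.trans (TopJoin.congr (piHomeomorphProdOfCardEqTwo rfl _)
    (piHomeomorphOfCardEqOne rfl _)).toHomotopyEquiv⟩
end
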